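/- arXiv:2203.01740 — 5 statements merged into one kernel-verified Lean document; each statement's English description precedes it below -/
import Mathlib

section
/- Let w₁, w₂ > 0 with w₁ ≥ σ·w₂, where σ is the unique positive real root of x⁴ − 3·x² − 3·x − 1 (σ ≈ 2.1479). There exist a symmetric weighted two-player congestion game with weights w₁, w₂ and proportional costs, a pure Nash equilibrium A, and an action profile B such that C(B) > 0 and C(A) = ((2·w₁⁴ + 4·w₁³·w₂ + 4·w₁²·w₂² + 2·w₁·w₂³)/(2·w₁⁴ + w₁³·w₂ + 2·w₁²·w₂² + 3·w₁·w₂³ + w₂⁴)) · C(B). -/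
open Finset Real

/-- A weighted two-player congestion game with weights `w₁, w₂`:
a finite set of resources `Fin n`, nonempty finite collections of actions
(subsets of resources) for each player, and nonnegative affine cost
coefficients `α r`, `β r` for each resource. -/
structure CGame (w₁ w₂ : ℝ) where
  n : ℕ
  A1 : Finset (Finset (Fin n))
  A2 : Finset (Finset (Fin n))
  A1_nonempty : A1.Nonempty
  A2_nonempty : A2.Nonempty
  α : Fin n → ℝ
  β : Fin n → ℝ
  α_nonneg : ∀ r, 0 ≤ α r
  β_nonneg : ∀ r, 0 ≤ β r

namespace CGame

variable {w₁ w₂ : ℝ}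

/-- The load of resource `r` under the action profile `(a₁, a₂)`. -/
def load (G : CGame w₁ w₂) (a₁ a₂ : Finset (Fin G.n)) (r : Fin G.n) : ℝ :=
  (if r ∈ a₁ then w₁ else 0) + (if r ∈ a₂ then w₂ else 0)

/-- Uniform cost of player 1. -/
def C1uni (G : CGame w₁ w₂) (a₁ a₂ : Finset (Fin G.n)) : ℝ :=
  ∑ r ∈ a₁, (G.α r + G.β r * G.load a₁ a₂ r)

/-- Uniform cost of player 2. -/
def C2uni (G : CGame w₁ w₂) (a₁ a₂ : Finset (Fin G.n)) : ℝ :=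
  ∑ r ∈ a₂, (G.α r + G.β r * G.load a₁ a₂ r)

/-- Uniform social cost. -/
def Cuni (G : CGame w₁ w₂) (a₁ a₂ : Finset (Fin G.n)) : ℝ :=
  G.C1uni a₁ a₂ + G.C2uni a₁ a₂

/-- Proportional cost of player 1. -/
def C1prop (G : CGame w₁ w₂) (a₁ a₂ : Finset (Fin G.n)) : ℝ :=
  w₁ * ∑ r ∈ a₁, (G.α r + G.β r * G.load a₁ a₂ r)

/-- Proportional cost of player 2. -/
def C2prop (G : CGame w₁ w₂) (a₁ a₂ : Finset (Fin G.n)) : ℝ :=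
  w₂ * ∑ r ∈ a₂, (G.α r + G.β r * G.load a₁ a₂ r)

/-- Proportional social cost. -/
def Cprop (G : CGame w₁ w₂) (a₁ a₂ : Finset (Fin G.n)) : ℝ :=
  G.C1prop a₁ a₂ + G.C2prop a₁ a₂

/-- `(a₁, a₂)` is an action profile: each action is admissible for its player. -/
def IsProfile (G : CGame w₁ w₂) (a₁ a₂ : Finset (Fin G.n)) : Prop :=
  a₁ ∈ G.A1 ∧ a₂ ∈ G.A2

/-- The game is symmetric if both players have the same actions. -/
def Symm (G : CGame w₁ w₂) : Prop := G.A1 = G.A2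

/-- Pure Nash equilibrium for uniform costs. -/
def IsNashUni (G : CGame w₁ w₂) (a₁ a₂ : Finset (Fin G.n)) : Prop :=
  G.IsProfile a₁ a₂ ∧
  (∀ b₁ ∈ G.A1, G.C1uni a₁ a₂ ≤ G.C1uni b₁ a₂) ∧
  (∀ b₂ ∈ G.A2, G.C2uni a₁ a₂ ≤ G.C2uni a₁ b₂)

/-- Pure Nash equilibrium for proportional costs. -/
def IsNashProp (G : CGame w₁ w₂) (a₁ a₂ : Finset (Fin G.n)) : Prop :=
  G.IsProfile a₁ a₂ ∧
  (∀ b₁ ∈ G.A1, G.C1prop a₁ a₂ ≤ G.C1prop b₁ a₂) ∧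
  (∀ b₂ ∈ G.A2, G.C2prop a₁ a₂ ≤ G.C2prop a₁ b₂)

/-- Subgame-perfect outcome with player 1 moving first, uniform costs. -/
def IsSPE1Uni (G : CGame w₁ w₂) (a₁ a₂ : Finset (Fin G.n)) : Prop :=
  G.IsProfile a₁ a₂ ∧
  ∃ b : Finset (Fin G.n) → Finset (Fin G.n),
    (∀ x ∈ G.A1, b x ∈ G.A2) ∧
    (∀ x ∈ G.A1, ∀ y ∈ G.A2, G.C2uni x (b x) ≤ G.C2uni x y) ∧
    a₂ = b a₁ ∧
    (∀ x ∈ G.A1, G.C1uni a₁ a₂ ≤ G.C1uni x (b x))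

/-- Subgame-perfect outcome with player 2 moving first, uniform costs. -/
def IsSPE2Uni (G : CGame w₁ w₂) (a₁ a₂ : Finset (Fin G.n)) : Prop :=
  G.IsProfile a₁ a₂ ∧
  ∃ b : Finset (Fin G.n) → Finset (Fin G.n),
    (∀ x ∈ G.A2, b x ∈ G.A1) ∧
    (∀ x ∈ G.A2, ∀ y ∈ G.A1, G.C1uni (b x) x ≤ G.C1uni y x) ∧
    a₁ = b a₂ ∧
    (∀ x ∈ G.A2, G.C2uni a₁ a₂ ≤ G.C2uni (b x) x)

/-- Subgame-perfect outcome with player 1 moving first, proportional costs. -/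
def IsSPE1Prop (G : CGame w₁ w₂) (a₁ a₂ : Finset (Fin G.n)) : Prop :=
  G.IsProfile a₁ a₂ ∧
  ∃ b : Finset (Fin G.n) → Finset (Fin G.n),
    (∀ x ∈ G.A1, b x ∈ G.A2) ∧
    (∀ x ∈ G.A1, ∀ y ∈ G.A2, G.C2prop x (b x) ≤ G.C2prop x y) ∧
    a₂ = b a₁ ∧
    (∀ x ∈ G.A1, G.C1prop a₁ a₂ ≤ G.C1prop x (b x))

/-- Subgame-perfect outcome with player 2 moving first, proportional costs. -/
def IsSPE2Prop (G : CGame w₁ w₂) (a₁ a₂ : Finset (Fin G.n)) : Prop :=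
  G.IsProfile a₁ a₂ ∧
  ∃ b : Finset (Fin G.n) → Finset (Fin G.n),
    (∀ x ∈ G.A2, b x ∈ G.A1) ∧
    (∀ x ∈ G.A2, ∀ y ∈ G.A1, G.C1prop (b x) x ≤ G.C1prop y x) ∧
    a₁ = b a₂ ∧
    (∀ x ∈ G.A2, G.C2prop a₁ a₂ ≤ G.C2prop (b x) x)

end CGame

/-!
Four resources `0, 1, 2, 3` lie on a path, the actions are the three pairs of neighbours, and costs
are purely linear. In the equilibrium player 1 takes `{1, 2}` and player 2 takes `{0, 1}`; in the
cheaper profile the actions `{0, 1}` and `{2, 3}` are disjoint. Requiring that player 1 be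
indifferent between all three actions, and player 2 between `{0, 1}` and `{2, 3}`, determines the
coefficients up to scale, and the solution is nonnegative when `w₂ ≤ w₁`. The range `σ * w₂ ≤ w₁`
lies inside this one, because `σ ^ 4 = 3 * σ ^ 2 + 3 * σ + 1 > 1`.
-/

theorem sum_add_mul_ite_add_ite {ι R : Type*} [DecidableEq ι] [CommSemiring R] (s t : Finset ι)
    (f g : ι → R) (u v : R) :
    ∑ i ∈ s, (f i + g i * ((if i ∈ s then u else 0) + if i ∈ t then v else 0)) =
      ∑ i ∈ s, f i + u * ∑ i ∈ s, g i + v * ∑ i ∈ s ∩ t, g i := by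
  rw [← sum_ite_mem, mul_sum, mul_sum, ← sum_add_distrib, ← sum_add_distrib]
  refine sum_congr rfl fun i hi => ?_
  rw [if_pos hi]
  split_ifs <;> ring

namespace CGame

variable {w₁ w₂ : ℝ}

theorem C1prop_eq (G : CGame w₁ w₂) (a₁ a₂ : Finset (Fin G.n)) :
    G.C1prop a₁ a₂ =
      w₁ * (∑ r ∈ a₁, G.α r + w₁ * ∑ r ∈ a₁, G.β r + w₂ * ∑ r ∈ a₁ ∩ a₂, G.β r) :=
  congrArg (w₁ * ·) (sum_add_mul_ite_add_ite a₁ a₂ G.α G.β w₁ w₂)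

theorem C2prop_eq (G : CGame w₁ w₂) (a₁ a₂ : Finset (Fin G.n)) :
    G.C2prop a₁ a₂ =
      w₂ * (∑ r ∈ a₂, G.α r + w₂ * ∑ r ∈ a₂, G.β r + w₁ * ∑ r ∈ a₂ ∩ a₁, G.β r) := by
  simp only [C2prop, load, add_comm (ite _ w₁ 0)]
  rw [sum_add_mul_ite_add_ite]

/-- The symmetric game with linear costs `β r * x` on the path of resources `0, 1, 2, 3`, in which
an action is a pair of neighbouring resources. It carries the lower-bound instance. -/
abbrev pathGame (w₁ w₂ : ℝ) (β : Fin 4 → ℝ) (hβ : ∀ r, 0 ≤ β r) : CGame w₁ w₂ where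
  n := 4
  A1 := {{0, 1}, {1, 2}, {2, 3}}
  A2 := {{0, 1}, {1, 2}, {2, 3}}
  A1_nonempty := insert_nonempty _ _
  A2_nonempty := insert_nonempty _ _
  α := fun _ => 0
  β := β
  α_nonneg := fun _ => le_rfl
  β_nonneg := hβ

section PathGame

variable {β : Fin 4 → ℝ} {hβ : ∀ r, 0 ≤ β r}

theorem C1prop_pathGame (a₁ a₂ : Finset (Fin 4)) :
    (pathGame w₁ w₂ β hβ).C1prop a₁ a₂ =
      w₁ * (w₁ * ∑ r ∈ a₁, β r + w₂ * ∑ r ∈ a₁ ∩ a₂, β r) := by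
  rw [C1prop_eq, sum_const_zero, zero_add]

theorem C2prop_pathGame (a₁ a₂ : Finset (Fin 4)) :
    (pathGame w₁ w₂ β hβ).C2prop a₁ a₂ =
      w₂ * (w₂ * ∑ r ∈ a₂, β r + w₁ * ∑ r ∈ a₂ ∩ a₁, β r) := by
  rw [C2prop_eq, sum_const_zero, zero_add]

theorem isNashProp_pathGame (h₁ : 0 ≤ w₁) (h₂ : 0 ≤ w₂)
    (h₁left : w₁ * β 2 ≤ (w₁ + w₂) * β 0)
    (h₁right : (w₁ + w₂) * β 1 ≤ w₁ * β 3)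
    (h₂mid : w₂ * β 0 ≤ (w₁ + w₂) * β 2)
    (h₂right : w₂ * β 0 + (w₁ + w₂) * β 1 ≤ (w₁ + w₂) * β 2 + w₂ * β 3) :
    (pathGame w₁ w₂ β hβ).IsNashProp {1, 2} {0, 1} := by
  have left_mid : ({0, 1} ∩ {1, 2} : Finset (Fin 4)) = {1} := by decide
  have mid_left : ({1, 2} ∩ {0, 1} : Finset (Fin 4)) = {1} := by decide
  have right_left : ({2, 3} ∩ {0, 1} : Finset (Fin 4)) = ∅ := by decide
  have right_mid : ({2, 3} ∩ {1, 2} : Finset (Fin 4)) = {2} := by decide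
  refine ⟨⟨by simp, by simp⟩, fun b hb => ?_, fun b hb => ?_⟩
  · rw [C1prop_pathGame, C1prop_pathGame]
    refine mul_le_mul_of_nonneg_left ?_ h₁
    simp only [mem_insert, mem_singleton] at hb
    rcases hb with rfl | rfl | rfl <;>
      simp only [mid_left, right_left, inter_self, sum_pair, ne_eq, Fin.reduceEq,
        zero_ne_one, not_false_eq_true, sum_singleton, sum_empty] <;> linarith
  · rw [C2prop_pathGame, C2prop_pathGame]
    refine mul_le_mul_of_nonneg_left ?_ h₂
    simp only [mem_insert, mem_singleton] at hb
    rcases hb with rfl | rfl | rfl <;>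
      simp only [left_mid, right_mid, inter_self, sum_pair, ne_eq, Fin.reduceEq,
        zero_ne_one, not_false_eq_true, sum_singleton] <;> linarith

theorem Cprop_pathGame_overlapping :
    (pathGame w₁ w₂ β hβ).Cprop {1, 2} {0, 1} =
      w₂ ^ 2 * β 0 + (w₁ + w₂) ^ 2 * β 1 + w₁ ^ 2 * β 2 := by
  have left_mid : ({0, 1} ∩ {1, 2} : Finset (Fin 4)) = {1} := by decide
  rw [Cprop, C1prop_pathGame, C2prop_pathGame, inter_comm {1, 2}, left_mid]
  simp only [sum_pair, ne_eq, Fin.reduceEq, zero_ne_one, not_false_eq_true, sum_singleton]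
  ring

theorem Cprop_pathGame_disjoint :
    (pathGame w₁ w₂ β hβ).Cprop {0, 1} {2, 3} =
      w₁ ^ 2 * (β 0 + β 1) + w₂ ^ 2 * (β 2 + β 3) := by
  have left_right : ({0, 1} ∩ {2, 3} : Finset (Fin 4)) = ∅ := by decide
  rw [Cprop, C1prop_pathGame, C2prop_pathGame, inter_comm {2, 3}, left_right]
  simp only [sum_pair, ne_eq, Fin.reduceEq, zero_ne_one, not_false_eq_true, sum_empty]
  ring

end PathGame

/-- The coefficients of the lower-bound instance: the solution of the indifference conditions,
scaled so as to be polynomial in the weights. -/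
def pathCoeff (w₁ w₂ : ℝ) : Fin 4 → ℝ :=
  ![w₁ * (w₁ ^ 2 - w₂ ^ 2), w₁ * (w₁ ^ 2 + w₁ * w₂ + w₂ ^ 2),
    (w₁ + w₂) * (w₁ ^ 2 - w₂ ^ 2), (w₁ + w₂) * (w₁ ^ 2 + w₁ * w₂ + w₂ ^ 2)]

theorem pathCoeff_nonneg (h₂ : 0 ≤ w₂) (hw : w₂ ≤ w₁) (r : Fin 4) : 0 ≤ pathCoeff w₁ w₂ r := by
  have h₁ : 0 ≤ w₁ := h₂.trans hw
  have hsq : 0 ≤ w₁ ^ 2 - w₂ ^ 2 := sub_nonneg.2 (pow_le_pow_left₀ h₂ hw 2)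
  match r with
  | 0 | 1 | 2 | 3 =>
    simp only [pathCoeff, Matrix.cons_val]
    positivity

theorem isNashProp_pathGame_pathCoeff (h₂ : 0 ≤ w₂) (hw : w₂ ≤ w₁) :
    (pathGame w₁ w₂ (pathCoeff w₁ w₂) (pathCoeff_nonneg h₂ hw)).IsNashProp {1, 2} {0, 1} := by
  have h₁ : 0 ≤ w₁ := h₂.trans hw
  refine isNashProp_pathGame h₁ h₂ ?left₁ ?right₁ ?mid₂ ?right₂
  all_goals simp only [pathCoeff, Matrix.cons_val]
  case mid₂ =>
    have hsq : 0 ≤ w₁ ^ 2 - w₂ ^ 2 := sub_nonneg.2 (pow_le_pow_left₀ h₂ hw 2)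
    calc w₂ * (w₁ * (w₁ ^ 2 - w₂ ^ 2))
        = w₂ * w₁ * (w₁ ^ 2 - w₂ ^ 2) := by ring
      _ ≤ (w₁ + w₂) * (w₁ + w₂) * (w₁ ^ 2 - w₂ ^ 2) := by gcongr <;> linarith
      _ = (w₁ + w₂) * ((w₁ + w₂) * (w₁ ^ 2 - w₂ ^ 2)) := by ring
  all_goals
    apply le_of_eq
    ring

theorem Cprop_pathCoeff_overlapping (h₂ : 0 ≤ w₂) (hw : w₂ ≤ w₁) :
    (pathGame w₁ w₂ (pathCoeff w₁ w₂) (pathCoeff_nonneg h₂ hw)).Cprop {1, 2} {0, 1} =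
      w₁ * (2 * w₁ ^ 4 + 4 * w₁ ^ 3 * w₂ + 4 * w₁ ^ 2 * w₂ ^ 2 + 2 * w₁ * w₂ ^ 3) := by
  rw [Cprop_pathGame_overlapping]
  simp only [pathCoeff, Matrix.cons_val]
  ring

theorem Cprop_pathCoeff_disjoint (h₂ : 0 ≤ w₂) (hw : w₂ ≤ w₁) :
    (pathGame w₁ w₂ (pathCoeff w₁ w₂) (pathCoeff_nonneg h₂ hw)).Cprop {0, 1} {2, 3} =
      w₁ * (2 * w₁ ^ 4 + w₁ ^ 3 * w₂ + 2 * w₁ ^ 2 * w₂ ^ 2 + 3 * w₁ * w₂ ^ 3 + w₂ ^ 4) := by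
  rw [Cprop_pathGame_disjoint]
  simp only [pathCoeff, Matrix.cons_val]
  ring

end CGame

theorem one_lt_of_quartic_root {σ : ℝ} (hσ : 0 < σ)
    (hroot : σ ^ 4 - 3 * σ ^ 2 - 3 * σ - 1 = 0) : 1 < σ := by
  have hpow : 1 < σ ^ 4 := by linarith [sq_nonneg σ]
  exact (one_lt_pow_iff_of_nonneg hσ.le four_ne_zero).1 hpow

open CGame in
theorem poa_sym_prop_lower_high_general (w₁ w₂ : ℝ) (h₁ : 0 < w₁) (h₂ : 0 ≤ w₂)
    (hw : w₂ ≤ w₁) :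
    ∃ (G : CGame w₁ w₂), G.Symm ∧
      ∃ a₁ a₂ b₁ b₂ : Finset (Fin G.n),
        G.IsNashProp a₁ a₂ ∧ G.IsProfile b₁ b₂ ∧ 0 < G.Cprop b₁ b₂ ∧
        G.Cprop a₁ a₂ =
          ((2 * w₁ ^ 4 + 4 * w₁ ^ 3 * w₂ + 4 * w₁ ^ 2 * w₂ ^ 2 + 2 * w₁ * w₂ ^ 3) /
            (2 * w₁ ^ 4 + w₁ ^ 3 * w₂ + 2 * w₁ ^ 2 * w₂ ^ 2 + 3 * w₁ * w₂ ^ 3 +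
              w₂ ^ 4)) * G.Cprop b₁ b₂ := by
  have hB := Cprop_pathCoeff_disjoint h₂ hw
  refine ⟨pathGame w₁ w₂ (pathCoeff w₁ w₂) (pathCoeff_nonneg h₂ hw), rfl,
    {1, 2}, {0, 1}, {0, 1}, {2, 3}, isNashProp_pathGame_pathCoeff h₂ hw,
    ⟨by simp, by simp⟩, by rw [hB]; positivity, ?_⟩
  rw [hB, Cprop_pathCoeff_overlapping h₂ hw]
  field_simp

/-- matching lower-bound instance for symmetric simultaneous
proportionally weighted games, case `w₁ ≥ σw₂`. -/
theorem poa_sym_prop_lower_high (w₁ w₂ : ℝ) (h₁ : 0 < w₁) (h₂ : 0 < w₂) (σ : ℝ)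
    (hσpos : 0 < σ) (hσroot : σ ^ 4 - 3 * σ ^ 2 - 3 * σ - 1 = 0)
    (hσuniq : ∀ x : ℝ, 0 < x → x ^ 4 - 3 * x ^ 2 - 3 * x - 1 = 0 → x = σ)
    (hlo : σ * w₂ ≤ w₁) :
    ∃ (G : CGame w₁ w₂), G.Symm ∧
      ∃ a₁ a₂ b₁ b₂ : Finset (Fin G.n),
        G.IsNashProp a₁ a₂ ∧ G.IsProfile b₁ b₂ ∧ 0 < G.Cprop b₁ b₂ ∧
        G.Cprop a₁ a₂ =
          ((2 * w₁ ^ 4 + 4 * w₁ ^ 3 * w₂ + 4 * w₁ ^ 2 * w₂ ^ 2 + 2 * w₁ * w₂ ^ 3) /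
            (2 * w₁ ^ 4 + w₁ ^ 3 * w₂ + 2 * w₁ ^ 2 * w₂ ^ 2 + 3 * w₁ * w₂ ^ 3 +
              w₂ ^ 4)) * G.Cprop b₁ b₂ := by
  have hσ : 1 < σ := one_lt_of_quartic_root hσpos hσroot
  exact poa_sym_prop_lower_high_general w₁ w₂ h₁ h₂.le
    ((le_mul_of_one_le_left h₂.le hσ.le).trans hlo)
end

section
/- Let w₁, w₂ > 0. There exist a weighted two-player congestion game with weights w₁, w₂ and uniform costs, a subgame-perfect outcome A with player 1 moving first, and an action profile B such that C(B) > 0 and C(A) = ρ · C(B), where ρ = 1 + w₁/(w₁ + w₂) if w₂ ≤ w₁; ρ = 1 + 2·w₁·w₂/(2·w₁² + w₁·w₂ + w₂²) if w₁ ≤ w₂ ≤ 2·w₁; and ρ = 1 + w₂/(2·w₁ + w₂) if w₂ ≥ 2·w₁. -/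
open Finset Real

/-!
The inefficiency comes from ties in the follower's best reply. If both players can use a resource
whose cost is its load, and the follower has a private alternative of constant cost `w₁ + w₂`, then
the follower is indifferent once the leader uses the shared resource. When `w₂ ≤ w₁` the harmful
reply is to leave, since the leader could have yielded the resource to the follower at no loss;
when `2 * w₁ ≤ w₂` it is to stay and congest the leader. For intermediate weights the leader
occupies a resource it has no use for, because the follower would otherwise congest the one it
needs.
-/

namespace CGame

variable {w₁ w₂ : ℝ}

/-- The action `a₂` of the follower (player 2) is a best reply to the leader's action `a₁`. -/
def IsBestReply (G : CGame w₁ w₂) (a₁ a₂ : Finset (Fin G.n)) : Prop :=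
  a₂ ∈ G.A2 ∧ ∀ y ∈ G.A2, G.C2uni a₁ a₂ ≤ G.C2uni a₁ y

theorem isSPE1Uni_iff {G : CGame w₁ w₂} {a₁ a₂ : Finset (Fin G.n)} :
    G.IsSPE1Uni a₁ a₂ ↔ a₁ ∈ G.A1 ∧ G.IsBestReply a₁ a₂ ∧
      ∀ x ∈ G.A1, ∃ y, G.IsBestReply x y ∧ G.C1uni a₁ a₂ ≤ G.C1uni x y := by
  constructor
  · rintro ⟨⟨ha₁, ha₂⟩, b, hbmem, hbmin, rfl, hlead⟩
    exact ⟨ha₁, ⟨ha₂, hbmin a₁ ha₁⟩,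
      fun x hx => ⟨b x, ⟨hbmem x hx, hbmin x hx⟩, hlead x hx⟩⟩
  · rintro ⟨ha₁, hreply, hdev⟩
    have hdev' : ∀ x ∈ G.A1, ∃ y,
        G.IsBestReply x y ∧ G.C1uni a₁ a₂ ≤ G.C1uni x y ∧ (x = a₁ → y = a₂) := by
      intro x hx
      obtain rfl | hne := eq_or_ne x a₁
      · exact ⟨a₂, hreply, le_rfl, fun _ => rfl⟩
      · obtain ⟨y, hy, hle⟩ := hdev x hx
        exact ⟨y, hy, hle, fun h => absurd h hne⟩
    choose! b hb hlead hb_eq using hdev'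
    exact ⟨⟨ha₁, hreply.1⟩, b, fun x hx => (hb x hx).1, fun x hx => (hb x hx).2,
      (hb_eq a₁ ha₁ rfl).symm, hlead⟩

/-- `ρ` is the ratio of the social cost of some subgame-perfect outcome (player 1 moving first) to
the positive social cost of some profile of the same game; the sequential price of anarchy for
weights `w₁, w₂` is then at least `ρ`. -/
def AttainsSeqRatio (w₁ w₂ ρ : ℝ) : Prop :=
  ∃ (G : CGame w₁ w₂) (a₁ a₂ b₁ b₂ : Finset (Fin G.n)),
    G.IsSPE1Uni a₁ a₂ ∧ G.IsProfile b₁ b₂ ∧ 0 < G.Cuni b₁ b₂ ∧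
      G.Cuni a₁ a₂ = ρ * G.Cuni b₁ b₂

section Bypass

variable {c : ℝ} (hc : 0 ≤ c) (hw : 0 ≤ w₁ + w₂)

/-- The game in which both players may use resource `0`, whose cost is its load, or bypass it: the
leader on resource `1` at constant cost `c`, the follower on resource `2` at constant cost
`w₁ + w₂`. It is reducible so that `{0}` is understood as a set of its resources. -/
abbrev bypassGame : CGame w₁ w₂ where
  n := 3
  A1 := {{0}, {1}}
  A2 := {{0}, {2}}
  A1_nonempty := insert_nonempty _ _
  A2_nonempty := insert_nonempty _ _
  α := ![0, c, w₁ + w₂]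
  β := ![1, 0, 0]
  α_nonneg := by simp [Fin.forall_fin_succ, hc, hw]
  β_nonneg := by simp [Fin.forall_fin_succ]

theorem bypassGame_isBestReply_share (h₁ : 0 ≤ w₁) {x : Finset (Fin 3)}
    (hx : x ∈ (bypassGame hc hw).A1) : (bypassGame hc hw).IsBestReply x {0} := by
  obtain rfl | rfl : x = {0} ∨ x = {1} := by simpa using hx
  all_goals simp [IsBestReply, C2uni, load, h₁]

theorem bypassGame_isBestReply_bypass : (bypassGame hc hw).IsBestReply {0} {2} := by
  simp [IsBestReply, C2uni, load]

theorem bypassGame_isSPE1Uni_bypass (h₁ : 0 ≤ w₁) (hle : w₁ ≤ c) :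
    (bypassGame hc hw).IsSPE1Uni {0} {2} := by
  have leader_stay : (bypassGame hc hw).C1uni {0} {2} = w₁ := by simp [C1uni, load]
  have leader_deviate : (bypassGame hc hw).C1uni {1} {0} = c := by simp [C1uni, load]
  refine isSPE1Uni_iff.2 ⟨by simp, bypassGame_isBestReply_bypass hc hw, fun x hx => ?_⟩
  obtain rfl | rfl : x = {0} ∨ x = {1} := by simpa using hx
  · exact ⟨{2}, bypassGame_isBestReply_bypass hc hw, le_rfl⟩
  · exact ⟨{0}, bypassGame_isBestReply_share hc hw h₁ hx, by rwa [leader_stay, leader_deviate]⟩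

theorem bypassGame_isSPE1Uni_share (h₁ : 0 ≤ w₁) (hle : w₁ + w₂ ≤ c) :
    (bypassGame hc hw).IsSPE1Uni {0} {0} := by
  have leader_stay : (bypassGame hc hw).C1uni {0} {0} = w₁ + w₂ := by simp [C1uni, load]
  have leader_deviate : (bypassGame hc hw).C1uni {1} {0} = c := by simp [C1uni, load]
  refine isSPE1Uni_iff.2 ⟨by simp, bypassGame_isBestReply_share hc hw h₁ (by simp),
    fun x hx => ⟨{0}, bypassGame_isBestReply_share hc hw h₁ hx, ?_⟩⟩
  obtain rfl | rfl : x = {0} ∨ x = {1} := by simpa using hx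
  · exact le_rfl
  · rwa [leader_stay, leader_deviate]

end Bypass

theorem attainsSeqRatio_bypass (h₁ : 0 ≤ w₁) (hw : 0 < w₁ + w₂) :
    AttainsSeqRatio w₁ w₂ (1 + w₁ / (w₁ + w₂)) := by
  let G : CGame w₁ w₂ := bypassGame h₁ hw.le
  have cost_spe : G.Cuni {0} {2} = w₁ + (w₁ + w₂) := by simp [G, Cuni, C1uni, C2uni, load]
  have cost_opt : G.Cuni {1} {0} = w₁ + w₂ := by simp [G, Cuni, C1uni, C2uni, load]
  refine ⟨G, {0}, {2}, {1}, {0}, bypassGame_isSPE1Uni_bypass h₁ hw.le h₁ le_rfl,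
    by simp [G, IsProfile], by rwa [cost_opt], ?_⟩
  rw [cost_spe, cost_opt, one_add_div hw.ne', div_mul_eq_mul_div, eq_div_iff hw.ne']
  ring

theorem attainsSeqRatio_share (h₁ : 0 ≤ w₁) (hw : 0 < w₁ + w₂) :
    AttainsSeqRatio w₁ w₂ (1 + w₂ / (2 * w₁ + w₂)) := by
  let G : CGame w₁ w₂ := bypassGame hw.le hw.le
  have cost_spe : G.Cuni {0} {0} = (w₁ + w₂) + (w₁ + w₂) := by
    simp [G, Cuni, C1uni, C2uni, load]
  have cost_opt : G.Cuni {0} {2} = w₁ + (w₁ + w₂) := by simp [G, Cuni, C1uni, C2uni, load]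
  have hpos : 0 < 2 * w₁ + w₂ := by linarith
  refine ⟨G, {0}, {0}, {0}, {2}, bypassGame_isSPE1Uni_share hw.le hw.le h₁ le_rfl,
    by simp [G, IsProfile], by linarith, ?_⟩
  rw [cost_spe, cost_opt, one_add_div hpos.ne', div_mul_eq_mul_div, eq_div_iff hpos.ne']
  ring

section Blocking

variable (h₁ : 0 ≤ w₁) (h₂ : 0 ≤ w₂)

/-- The game in which the leader needs resource `0` and may block resource `1` as well, while the
follower either uses resource `1`, complemented by resource `0` or by the constant-cost resource
`2`, or takes the constant-cost resource `3`. The coefficients make the follower indifferent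
between its three actions if resource `1` is blocked, and between its first two actions if it is
not. It is reducible so that `{0, 1}` is understood as a set of its resources. -/
abbrev blockingGame : CGame w₁ w₂ where
  n := 4
  A1 := {{0}, {0, 1}}
  A2 := {{0, 1}, {1, 2}, {3}}
  A1_nonempty := insert_nonempty _ _
  A2_nonempty := insert_nonempty _ _
  α := ![0, 0, w₁ * (w₁ + w₂), (w₁ + w₂) ^ 2]
  β := ![w₁, w₂, 0, 0]
  α_nonneg := by
    have : 0 ≤ w₁ * (w₁ + w₂) := by positivity
    simp [Fin.forall_fin_succ, this, sq_nonneg]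
  β_nonneg := by simp [Fin.forall_fin_succ, h₁, h₂]

theorem blockingGame_isBestReply_block : (blockingGame h₁ h₂).IsBestReply {0, 1} {3} := by
  have cost_share : (blockingGame h₁ h₂).C2uni {0, 1} {0, 1} =
      w₁ * (w₁ + w₂) + w₂ * (w₁ + w₂) := by simp [C2uni, load]
  have cost_complement : (blockingGame h₁ h₂).C2uni {0, 1} {1, 2} =
      w₂ * (w₁ + w₂) + w₁ * (w₁ + w₂) := by simp [C2uni, load]
  have cost_private : (blockingGame h₁ h₂).C2uni {0, 1} {3} = (w₁ + w₂) ^ 2 := by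
    simp [C2uni, load]
  refine ⟨by simp, fun y hy => ?_⟩
  obtain rfl | rfl | rfl : y = {0, 1} ∨ y = {1, 2} ∨ y = {3} := by simpa using hy
  all_goals linarith

theorem blockingGame_isBestReply_congest : (blockingGame h₁ h₂).IsBestReply {0} {0, 1} := by
  have cost_share : (blockingGame h₁ h₂).C2uni {0} {0, 1} =
      w₁ * (w₁ + w₂) + w₂ * w₂ := by simp [C2uni, load]
  have cost_complement : (blockingGame h₁ h₂).C2uni {0} {1, 2} =
      w₂ * w₂ + w₁ * (w₁ + w₂) := by simp [C2uni, load]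
  have cost_private : (blockingGame h₁ h₂).C2uni {0} {3} = (w₁ + w₂) ^ 2 := by
    simp [C2uni, load]
  refine ⟨by simp, fun y hy => ?_⟩
  obtain rfl | rfl | rfl : y = {0, 1} ∨ y = {1, 2} ∨ y = {3} := by simpa using hy
  all_goals linarith [mul_nonneg h₁ h₂]

theorem blockingGame_isSPE1Uni : (blockingGame h₁ h₂).IsSPE1Uni {0, 1} {3} := by
  have leader_block : (blockingGame h₁ h₂).C1uni {0, 1} {3} = w₁ * w₁ + w₂ * w₁ := by
    simp [C1uni, load]
  have leader_congested : (blockingGame h₁ h₂).C1uni {0} {0, 1} = w₁ * (w₁ + w₂) := by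
    simp [C1uni, load]
  refine isSPE1Uni_iff.2 ⟨by simp, blockingGame_isBestReply_block h₁ h₂, fun x hx => ?_⟩
  obtain rfl | rfl : x = {0} ∨ x = {0, 1} := by simpa using hx
  · exact ⟨{0, 1}, blockingGame_isBestReply_congest h₁ h₂, by linarith⟩
  · exact ⟨{3}, blockingGame_isBestReply_block h₁ h₂, le_rfl⟩

end Blocking

theorem attainsSeqRatio_block (h₁ : 0 ≤ w₁) (h₂ : 0 ≤ w₂) (hw : 0 < w₁ + w₂) :
    AttainsSeqRatio w₁ w₂ (1 + 2 * w₁ * w₂ / (2 * w₁ ^ 2 + w₁ * w₂ + w₂ ^ 2)) := by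
  let G : CGame w₁ w₂ := blockingGame h₁ h₂
  have cost_spe : G.Cuni {0, 1} {3} = (w₁ * w₁ + w₂ * w₁) + (w₁ + w₂) ^ 2 := by
    simp [G, Cuni, C1uni, C2uni, load]
  have cost_opt : G.Cuni {0} {1, 2} = w₁ * w₁ + (w₂ * w₂ + w₁ * (w₁ + w₂)) := by
    simp [G, Cuni, C1uni, C2uni, load]
  have hpos : 0 < 2 * w₁ ^ 2 + w₁ * w₂ + w₂ ^ 2 := by nlinarith [mul_nonneg h₁ h₂, pow_pos hw 2]
  refine ⟨G, {0, 1}, {3}, {0}, {1, 2}, blockingGame_isSPE1Uni h₁ h₂,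
    by simp [G, IsProfile], by linarith, ?_⟩
  rw [cost_spe, cost_opt, one_add_div hpos.ne', div_mul_eq_mul_div, eq_div_iff hpos.ne']
  ring

/-- The lower bound `ρ` on the sequential price of anarchy for uniform costs with player 1 moving
first, as a function of the weights. At `w₂ = w₁` and `w₂ = 2 * w₁` the adjacent formulas agree. -/
noncomputable def seqRatio (w₁ w₂ : ℝ) : ℝ :=
  if w₂ ≤ w₁ then 1 + w₁ / (w₁ + w₂)
  else if w₂ ≤ 2 * w₁ then 1 + 2 * w₁ * w₂ / (2 * w₁ ^ 2 + w₁ * w₂ + w₂ ^ 2)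
  else 1 + w₂ / (2 * w₁ + w₂)

theorem seqRatio_of_le (h : w₂ ≤ w₁) : seqRatio w₁ w₂ = 1 + w₁ / (w₁ + w₂) :=
  if_pos h

theorem seqRatio_of_le_of_le_two_mul (h₁ : 0 < w₁) (hle : w₁ ≤ w₂) (hle' : w₂ ≤ 2 * w₁) :
    seqRatio w₁ w₂ = 1 + 2 * w₁ * w₂ / (2 * w₁ ^ 2 + w₁ * w₂ + w₂ ^ 2) := by
  obtain rfl | hlt := hle.eq_or_lt
  · rw [seqRatio_of_le le_rfl]
    field_simp
    norm_num
  · rw [seqRatio, if_neg hlt.not_ge, if_pos hle']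

theorem seqRatio_of_two_mul_le (h₁ : 0 < w₁) (hle : 2 * w₁ ≤ w₂) :
    seqRatio w₁ w₂ = 1 + w₂ / (2 * w₁ + w₂) := by
  obtain rfl | hlt := hle.eq_or_lt
  · rw [seqRatio_of_le_of_le_two_mul h₁ (by linarith) le_rfl]
    field_simp
    norm_num
  · rw [seqRatio, if_neg (by linarith), if_neg hlt.not_ge]

theorem attainsSeqRatio_seqRatio (h₁ : 0 ≤ w₁) (h₂ : 0 ≤ w₂) (hw : 0 < w₁ + w₂) :
    AttainsSeqRatio w₁ w₂ (seqRatio w₁ w₂) := by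
  rw [seqRatio]
  split_ifs
  · exact attainsSeqRatio_bypass h₁ hw
  · exact attainsSeqRatio_block h₁ h₂ hw
  · exact attainsSeqRatio_share h₁ hw

end CGame

/-- matching lower-bound instances for sequential uniformly
weighted two-player congestion games, with player 1 moving first. -/
theorem poa_seq_uniform_lower (w₁ w₂ : ℝ) (h₁ : 0 < w₁) (h₂ : 0 < w₂) :
    ∃ (G : CGame w₁ w₂) (a₁ a₂ b₁ b₂ : Finset (Fin G.n)),
      G.IsSPE1Uni a₁ a₂ ∧ G.IsProfile b₁ b₂ ∧ 0 < G.Cuni b₁ b₂ ∧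
      ((w₂ ≤ w₁ →
        G.Cuni a₁ a₂ = (1 + w₁ / (w₁ + w₂)) * G.Cuni b₁ b₂) ∧
      (w₁ ≤ w₂ → w₂ ≤ 2 * w₁ →
        G.Cuni a₁ a₂ =
          (1 + 2 * w₁ * w₂ / (2 * w₁ ^ 2 + w₁ * w₂ + w₂ ^ 2)) * G.Cuni b₁ b₂) ∧
      (2 * w₁ ≤ w₂ →
        G.Cuni a₁ a₂ = (1 + w₂ / (2 * w₁ + w₂)) * G.Cuni b₁ b₂)) := by
  obtain ⟨G, a₁, a₂, b₁, b₂, hspe, hprofile, hpos, hratio⟩ :=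
    CGame.attainsSeqRatio_seqRatio h₁.le h₂.le (add_pos h₁ h₂)
  refine ⟨G, a₁, a₂, b₁, b₂, hspe, hprofile, hpos, fun hle => ?_, fun hle hle' => ?_, fun hle => ?_⟩
  · rw [hratio, CGame.seqRatio_of_le hle]
  · rw [hratio, CGame.seqRatio_of_le_of_le_two_mul h₁ hle hle']
  · rw [hratio, CGame.seqRatio_of_two_mul_le h₁ hle]
end

section
/- In every weighted two-player congestion game with weights w₁, w₂ ≥ 0, w₁ + w₂ > 0, and uniform costs, every subgame-perfect outcome A (with either player moving first) and every action profile B satisfy C(A) ≤ 2 · C(B). Moreover, for every ε > 0 there exist such a game (for suitable weights), a subgame-perfect outcome A with player 1 moving first, and an action profile B with C(B) > 0 and C(A) > (2 − ε) · C(B). -/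
open Finset Real

/-!
Let `c` be the second mover's reply to `b₁`. Subgame perfection lets each term of the outcome's
cost be compared with a cost involving `c`, and such a cost splits as a solo cost plus a weight
times the total slope `∑ r ∈ a ∩ c, β r` of the shared resources. What remains is a linear
inequality between solo costs and shared slopes, with a separate argument for each order of the
two weights.

For tightness, take Pigou's two resources, one costing its load and one costing `w₁ + w₂`
whatever its load: a first mover who expects the second mover to use the variable resource in any
case is willing to leave it to him, although the opposite assignment is cheaper when `w₁ < w₂`.
The ratio of the two costs is `(w₁ + 2 * w₂) / (2 * w₁ + w₂)`.
-/

namespace CGame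

variable {w₁ w₂ : ℝ}

/-- The same game with the roles of the two players exchanged; it reduces statements about player 2
to statements about player 1. -/
def swap (G : CGame w₁ w₂) : CGame w₂ w₁ where
  n := G.n
  A1 := G.A2
  A2 := G.A1
  A1_nonempty := G.A2_nonempty
  A2_nonempty := G.A1_nonempty
  α := G.α
  β := G.β
  α_nonneg := G.α_nonneg
  β_nonneg := G.β_nonneg

theorem load_swap (G : CGame w₁ w₂) (a₁ a₂ : Finset (Fin G.n)) (r : Fin G.n) :
    G.swap.load a₂ a₁ r = G.load a₁ a₂ r :=
  add_comm _ _

theorem C1uni_swap (G : CGame w₁ w₂) (a₁ a₂ : Finset (Fin G.n)) :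
    G.swap.C1uni a₂ a₁ = G.C2uni a₁ a₂ :=
  Finset.sum_congr rfl fun r _ => congrArg (G.α r + G.β r * ·) (G.load_swap a₁ a₂ r)

theorem C2uni_swap (G : CGame w₁ w₂) (a₁ a₂ : Finset (Fin G.n)) :
    G.swap.C2uni a₂ a₁ = G.C1uni a₁ a₂ :=
  (G.swap.C1uni_swap a₂ a₁).symm

theorem Cuni_swap (G : CGame w₁ w₂) (a₁ a₂ : Finset (Fin G.n)) :
    G.swap.Cuni a₂ a₁ = G.Cuni a₁ a₂ := by
  unfold Cuni
  rw [C1uni_swap, C2uni_swap, add_comm]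

theorem IsProfile.swap {G : CGame w₁ w₂} {a₁ a₂ : Finset (Fin G.n)} (h : G.IsProfile a₁ a₂) :
    G.swap.IsProfile a₂ a₁ :=
  And.symm h

theorem IsSPE2Uni.swap {G : CGame w₁ w₂} {a₁ a₂ : Finset (Fin G.n)}
    (h : G.IsSPE2Uni a₁ a₂) : G.swap.IsSPE1Uni a₂ a₁ := by
  obtain ⟨hprofile, b, hb, hreply, heq, hopt⟩ := h
  refine ⟨hprofile.swap, b, hb, fun x hx y hy => ?_, heq, fun x hx => ?_⟩
  · exact (G.C2uni_swap (b x) x).trans_le ((hreply x hx y hy).trans_eq (G.C2uni_swap y x).symm)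
  · exact (G.C1uni_swap a₁ a₂).trans_le ((hopt x hx).trans_eq (G.C1uni_swap (b x) x).symm)

/-- The total slope of the resources shared by two actions. It measures the interaction of the
players: each pays the other's weight times this quantity on top of the cost of being alone. -/
def sharedSlope (G : CGame w₁ w₂) (a c : Finset (Fin G.n)) : ℝ :=
  ∑ r ∈ a ∩ c, G.β r

theorem sharedSlope_nonneg (G : CGame w₁ w₂) (a c : Finset (Fin G.n)) :
    0 ≤ G.sharedSlope a c :=
  Finset.sum_nonneg fun r _ => G.β_nonneg r

theorem sharedSlope_comm (G : CGame w₁ w₂) (a c : Finset (Fin G.n)) :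
    G.sharedSlope a c = G.sharedSlope c a := by
  rw [sharedSlope, Finset.inter_comm, sharedSlope]

theorem sharedSlope_le_self_right (G : CGame w₁ w₂) (a c : Finset (Fin G.n)) :
    G.sharedSlope a c ≤ G.sharedSlope c c := by
  rw [sharedSlope, sharedSlope, Finset.inter_self]
  exact Finset.sum_le_sum_of_subset_of_nonneg Finset.inter_subset_right
    fun r _ _ => G.β_nonneg r

-- The empty action exerts no load, so `C1uni a ∅` is the cost of `a` to player 1 alone.
theorem C1uni_eq_add_mul_sharedSlope (G : CGame w₁ w₂) (a c : Finset (Fin G.n)) :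
    G.C1uni a c = G.C1uni a ∅ + w₂ * G.sharedSlope a c := by
  rw [sharedSlope, ← Finset.sum_ite_mem, Finset.mul_sum, C1uni, C1uni, ← Finset.sum_add_distrib]
  refine Finset.sum_congr rfl fun r _ => ?_
  simp only [load, Finset.notMem_empty, if_false]
  split_ifs <;> ring

theorem C2uni_eq_add_mul_sharedSlope (G : CGame w₁ w₂) (a c : Finset (Fin G.n)) :
    G.C2uni a c = G.C2uni ∅ c + w₁ * G.sharedSlope a c := by
  rw [← C1uni_swap, ← C1uni_swap, sharedSlope_comm]
  exact G.swap.C1uni_eq_add_mul_sharedSlope c a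

theorem C1uni_empty_le (G : CGame w₁ w₂) (h₂ : 0 ≤ w₂) (a c : Finset (Fin G.n)) :
    G.C1uni a ∅ ≤ G.C1uni a c := by
  rw [C1uni_eq_add_mul_sharedSlope G a c]
  exact le_add_of_nonneg_right (mul_nonneg h₂ (G.sharedSlope_nonneg a c))

theorem mul_sharedSlope_self_le_C1uni (G : CGame w₁ w₂) (a : Finset (Fin G.n)) :
    w₁ * G.sharedSlope a a ≤ G.C1uni a ∅ := by
  rw [sharedSlope, Finset.inter_self, Finset.mul_sum, C1uni]
  refine Finset.sum_le_sum fun r hr => ?_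
  simp only [load, hr, Finset.notMem_empty, if_true, if_false]
  linarith [G.α_nonneg r]

theorem mul_sharedSlope_self_le_C2uni (G : CGame w₁ w₂) (c : Finset (Fin G.n)) :
    w₂ * G.sharedSlope c c ≤ G.C2uni ∅ c :=
  (G.swap.mul_sharedSlope_self_le_C1uni c).trans_eq (G.C1uni_swap ∅ c)

theorem mul_sharedSlope_le_C1uni (G : CGame w₁ w₂) (h₁ : 0 ≤ w₁) (a c : Finset (Fin G.n)) :
    w₁ * G.sharedSlope a c ≤ G.C1uni a ∅ := by
  rw [sharedSlope_comm]
  exact (mul_le_mul_of_nonneg_left (G.sharedSlope_le_self_right c a) h₁).trans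
    (G.mul_sharedSlope_self_le_C1uni a)

theorem mul_sharedSlope_le_C2uni (G : CGame w₁ w₂) (h₂ : 0 ≤ w₂) (a c : Finset (Fin G.n)) :
    w₂ * G.sharedSlope a c ≤ G.C2uni ∅ c :=
  (mul_le_mul_of_nonneg_left (G.sharedSlope_le_self_right a c) h₂).trans
    (G.mul_sharedSlope_self_le_C2uni c)

theorem C1uni_nonneg (G : CGame w₁ w₂) (h₁ : 0 ≤ w₁) (h₂ : 0 ≤ w₂) (a c : Finset (Fin G.n)) :
    0 ≤ G.C1uni a c :=
  (mul_nonneg h₁ (G.sharedSlope_nonneg a a)).trans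
    ((G.mul_sharedSlope_self_le_C1uni a).trans (G.C1uni_empty_le h₂ a c))

section UpperBound

variable {G : CGame w₁ w₂} {a₁ a₂ b₁ b₂ : Finset (Fin G.n)}

theorem IsSPE1Uni.exists_reply (hA : G.IsSPE1Uni a₁ a₂) (hB : G.IsProfile b₁ b₂) :
    ∃ c, G.C1uni a₁ a₂ ≤ G.C1uni b₁ c ∧ G.C2uni a₁ a₂ ≤ G.C2uni a₁ c ∧
      G.C2uni b₁ c ≤ G.C2uni b₁ b₂ := by
  obtain ⟨⟨ha₁, -⟩, b, hb, hreply, rfl, hopt⟩ := hA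
  exact ⟨b b₁, hopt b₁ hB.1, hreply a₁ ha₁ (b b₁) (hb b₁ hB.1), hreply b₁ hB.1 b₂ hB.2⟩

theorem IsSPE1Uni.Cuni_le_of_w₁_le_w₂ (hA : G.IsSPE1Uni a₁ a₂) (hB : G.IsProfile b₁ b₂)
    (h₁ : 0 ≤ w₁) (hw : w₁ ≤ w₂) :
    G.Cuni a₁ a₂ ≤ G.C1uni b₁ b₂ + 2 * G.C2uni b₁ b₂ := by
  obtain ⟨c, hfirst, hsecond, hreply⟩ := hA.exists_reply hB
  have hshared : w₁ * G.sharedSlope a₁ c + w₂ * G.sharedSlope b₁ c ≤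
      G.C2uni ∅ c + w₁ * G.sharedSlope b₁ c := by
    have ha := mul_le_mul_of_nonneg_left (G.sharedSlope_le_self_right a₁ c) h₁
    -- Off `b₁`, the slope of `c` is weighted by `w₁` on the left and by `w₂` on the right.
    have hb := mul_le_mul_of_nonneg_right hw
      (sub_nonneg.2 (G.sharedSlope_le_self_right b₁ c))
    linarith [G.mul_sharedSlope_self_le_C2uni c]
  have hnonneg := mul_nonneg h₁ (G.sharedSlope_nonneg b₁ c)
  calc G.Cuni a₁ a₂ ≤ G.C1uni b₁ c + G.C2uni a₁ c := add_le_add hfirst hsecond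
    _ = G.C1uni b₁ ∅ + G.C2uni ∅ c +
        (w₁ * G.sharedSlope a₁ c + w₂ * G.sharedSlope b₁ c) := by
      rw [C1uni_eq_add_mul_sharedSlope G b₁ c, C2uni_eq_add_mul_sharedSlope G a₁ c]
      ring
    _ ≤ G.C1uni b₁ ∅ + 2 * G.C2uni b₁ c := by
      rw [C2uni_eq_add_mul_sharedSlope G b₁ c]
      linarith
    _ ≤ G.C1uni b₁ b₂ + 2 * G.C2uni b₁ b₂ := by
      gcongr
      exact G.C1uni_empty_le (h₁.trans hw) b₁ b₂

theorem IsSPE1Uni.Cuni_le_of_w₂_le_w₁ (hA : G.IsSPE1Uni a₁ a₂) (hB : G.IsProfile b₁ b₂)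
    (h₂ : 0 ≤ w₂) (hw : w₂ ≤ w₁) :
    G.Cuni a₁ a₂ ≤ 2 * G.Cuni b₁ b₂ := by
  have h₁ := h₂.trans hw
  obtain ⟨c, hfirst, hsecond, hreply⟩ := hA.exists_reply hB
  have hsecond' : G.C2uni a₁ a₂ ≤ G.C2uni ∅ c + G.C1uni a₁ a₂ :=
    calc G.C2uni a₁ a₂ ≤ G.C2uni ∅ c + w₁ * G.sharedSlope a₁ c :=
          hsecond.trans_eq (G.C2uni_eq_add_mul_sharedSlope a₁ c)
      _ ≤ G.C2uni ∅ c + G.C1uni a₁ a₂ := by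
        gcongr
        exact (G.mul_sharedSlope_le_C1uni h₁ a₁ c).trans (G.C1uni_empty_le h₂ a₁ a₂)
  calc G.Cuni a₁ a₂ ≤ 2 * G.C1uni a₁ a₂ + G.C2uni ∅ c := by
        rw [Cuni]
        linarith
    _ ≤ 2 * G.C1uni b₁ c + G.C2uni ∅ c := by gcongr
    _ ≤ 2 * G.C1uni b₁ ∅ + 2 * G.C2uni b₁ c := by
      rw [C1uni_eq_add_mul_sharedSlope G b₁ c, C2uni_eq_add_mul_sharedSlope G b₁ c]
      -- Of the two copies of `w₂ * sharedSlope b₁ c`, one is at most `C2uni ∅ c` and the other at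
      -- most `w₁ * sharedSlope b₁ c`.
      linarith [G.mul_sharedSlope_le_C2uni h₂ b₁ c, mul_nonneg h₁ (G.sharedSlope_nonneg b₁ c),
        mul_le_mul_of_nonneg_right hw (G.sharedSlope_nonneg b₁ c)]
    _ ≤ 2 * G.C1uni b₁ b₂ + 2 * G.C2uni b₁ b₂ := by
      gcongr
      exact G.C1uni_empty_le h₂ b₁ b₂
    _ = 2 * G.Cuni b₁ b₂ := (mul_add _ _ _).symm

theorem IsSPE1Uni.Cuni_le_two_mul (hA : G.IsSPE1Uni a₁ a₂) (hB : G.IsProfile b₁ b₂)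
    (h₁ : 0 ≤ w₁) (h₂ : 0 ≤ w₂) : G.Cuni a₁ a₂ ≤ 2 * G.Cuni b₁ b₂ := by
  rcases le_total w₁ w₂ with hw | hw
  · have hle := hA.Cuni_le_of_w₁_le_w₂ hB h₁ hw
    have hnonneg := G.C1uni_nonneg h₁ h₂ b₁ b₂
    rw [Cuni.eq_def G b₁ b₂]
    linarith
  · exact hA.Cuni_le_of_w₂_le_w₁ hB h₂ hw

theorem IsSPE2Uni.Cuni_le_two_mul (hA : G.IsSPE2Uni a₁ a₂) (hB : G.IsProfile b₁ b₂)
    (h₁ : 0 ≤ w₁) (h₂ : 0 ≤ w₂) : G.Cuni a₁ a₂ ≤ 2 * G.Cuni b₁ b₂ := by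
  rw [← Cuni_swap, ← Cuni_swap]
  exact hA.swap.Cuni_le_two_mul hB.swap h₂ h₁

end UpperBound

/-- Pigou's game, in which both players choose between a resource whose cost is its load and one
of constant cost `w₁ + w₂`. It is the extremal instance for the bound `2` as `w₁ / w₂ → 0`. -/
abbrev pigou (h : 0 ≤ w₁ + w₂) : CGame w₁ w₂ where
  n := 2
  A1 := {{0}, {1}}
  A2 := {{0}, {1}}
  A1_nonempty := Finset.insert_nonempty _ _
  A2_nonempty := Finset.insert_nonempty _ _
  α := ![0, w₁ + w₂]
  β := ![1, 0]
  α_nonneg r := by fin_cases r <;> simp [h]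
  β_nonneg r := by fin_cases r <;> simp

theorem pigou_C1uni_zero (h : 0 ≤ w₁ + w₂) (j : Fin 2) :
    (pigou h).C1uni {0} {j} = w₁ + if j = 0 then w₂ else 0 := by
  simp [C1uni, load, eq_comm]

theorem pigou_C1uni_one (h : 0 ≤ w₁ + w₂) (c : Finset (Fin 2)) :
    (pigou h).C1uni {1} c = w₁ + w₂ := by
  simp [C1uni]

theorem pigou_C2uni_zero (h : 0 ≤ w₁ + w₂) (i : Fin 2) :
    (pigou h).C2uni {i} {0} = (if i = 0 then w₁ else 0) + w₂ := by
  simp [C2uni, load, eq_comm]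

theorem pigou_C2uni_one (h : 0 ≤ w₁ + w₂) (a : Finset (Fin 2)) :
    (pigou h).C2uni a {1} = w₁ + w₂ := by
  simp [C2uni]

theorem pigou_isProfile (h : 0 ≤ w₁ + w₂) (i j : Fin 2) : (pigou h).IsProfile {i} {j} := by
  fin_cases i <;> fin_cases j <;> simp [IsProfile]

theorem pigou_isSPE1Uni (h : 0 ≤ w₁ + w₂) (h₁ : 0 ≤ w₁) : (pigou h).IsSPE1Uni {1} {0} := by
  refine ⟨pigou_isProfile h 1 0, fun _ => {0}, fun _ _ => (pigou_isProfile h 1 0).2, ?_, rfl, ?_⟩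
  · simp only [Finset.forall_mem_insert, Finset.mem_singleton, forall_eq]
    refine ⟨⟨le_rfl, ?_⟩, le_rfl, ?_⟩
    · rw [pigou_C2uni_zero, pigou_C2uni_one, if_pos rfl]
    · rw [pigou_C2uni_zero, pigou_C2uni_one, if_neg one_ne_zero]
      linarith
  · simp only [Finset.forall_mem_insert, Finset.mem_singleton, forall_eq]
    refine ⟨?_, le_rfl⟩
    rw [pigou_C1uni_zero, pigou_C1uni_one, if_pos rfl]

theorem pigou_Cuni_one_zero (h : 0 ≤ w₁ + w₂) : (pigou h).Cuni {1} {0} = w₁ + 2 * w₂ := by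
  rw [Cuni, pigou_C1uni_one, pigou_C2uni_zero, if_neg one_ne_zero]
  ring

theorem pigou_Cuni_zero_one (h : 0 ≤ w₁ + w₂) : (pigou h).Cuni {0} {1} = 2 * w₁ + w₂ := by
  rw [Cuni, pigou_C1uni_zero, pigou_C2uni_one, if_neg one_ne_zero]
  ring

end CGame

/-- the sequential price of anarchy for uniformly weighted
two-player congestion games is at most `2`, and `2` is approached by
suitable instances. -/
theorem poa_seq_uniform_two :
    (∀ w₁ w₂ : ℝ, 0 ≤ w₁ → 0 ≤ w₂ → 0 < w₁ + w₂ →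
      ∀ (G : CGame w₁ w₂) (a₁ a₂ b₁ b₂ : Finset (Fin G.n)),
        (G.IsSPE1Uni a₁ a₂ ∨ G.IsSPE2Uni a₁ a₂) → G.IsProfile b₁ b₂ →
        G.Cuni a₁ a₂ ≤ 2 * G.Cuni b₁ b₂) ∧
    (∀ ε : ℝ, 0 < ε →
      ∃ (w₁ w₂ : ℝ), 0 ≤ w₁ ∧ 0 ≤ w₂ ∧ 0 < w₁ + w₂ ∧
        ∃ (G : CGame w₁ w₂) (a₁ a₂ b₁ b₂ : Finset (Fin G.n)),
          G.IsSPE1Uni a₁ a₂ ∧ G.IsProfile b₁ b₂ ∧ 0 < G.Cuni b₁ b₂ ∧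
          (2 - ε) * G.Cuni b₁ b₂ < G.Cuni a₁ a₂) := by
  refine ⟨fun w₁ w₂ h₁ h₂ _ G a₁ a₂ b₁ b₂ hA hB => ?_, fun ε hε => ?_⟩
  · exact hA.elim (·.Cuni_le_two_mul hB h₁ h₂) (·.Cuni_le_two_mul hB h₁ h₂)
  -- `(w₁ + 2) / (2 * w₁ + 1) > 2 - 3 * w₁`, so `w₁ = ε / 3` suffices when `w₂ = 1`.
  · have hw : 0 < ε / 3 + 1 := by positivity
    refine ⟨ε / 3, 1, by positivity, zero_le_one, hw, CGame.pigou hw.le, {1}, {0}, {0}, {1},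
      CGame.pigou_isSPE1Uni hw.le (by positivity), CGame.pigou_isProfile hw.le 0 1, ?_, ?_⟩
    · rw [CGame.pigou_Cuni_zero_one]
      positivity
    · rw [CGame.pigou_Cuni_zero_one, CGame.pigou_Cuni_one_zero]
      linarith [mul_pos hε hε]
end

section
/- Let w₁, w₂ ≥ 0 with w₁ + w₂ > 0. In every weighted two-player congestion game with weights w₁, w₂ and proportional costs, every subgame-perfect outcome A (with either player moving first) and every action profile B satisfy C(A) ≤ (1 + w₁·w₂/(w₁² + w₂²)) · C(B). -/
open Finset Real

/-!
A player's cost splits into a solo cost, `S a₁` or `T a₂`, and an interaction `I a₁ a₂` which is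
common to both players and supported on the shared resources. A shared resource of slope `β`
contributes `β w₁ w₂` to the interaction and at least `β w₁²` and `β w₂²` to the solo costs; hence
`I ≤ k (S + T)` with `k = w₁ w₂ / (w₁² + w₂²)`.

Let the leader deviate from the outcome `(a₁, a₂)` to `b₁`, and let `c` be the follower's reply.
Since `a₂` is a best reply to `a₁`, the follower pays at most `T c + I a₁ c ≤ (1 + k) T c + k S a₁`
in the outcome. The term `k S a₁` is absorbed by `k` times the leader's cost, and the leader's cost
is at most `S b₁ + I b₁ c`, so `C(a₁, a₂) ≤ (1 + k) (S b₁ + I b₁ c + T c)`. As `c` is a best reply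
to `b₁`, the sum `I b₁ c + T c` is at most the follower's cost in `(b₁, b₂)`.
-/

/-- `(x₀, y₀)` is the outcome, `x` a deviation of the leader and `z` the follower's reply to it. -/
theorem leaderFollower_cost_le {R X Y : Type*} [CommRing R] [LinearOrder R] [IsStrictOrderedRing R]
    {S : X → R} {T : Y → R} {I : X → Y → R} {k : R} (hk : 0 ≤ k) (hI_nonneg : ∀ x y, 0 ≤ I x y)
    (hI_le : ∀ x y, I x y ≤ k * (S x + T y)) {x₀ x : X} {y₀ z y : Y}
    (hlead : S x₀ + I x₀ y₀ ≤ S x + I x z)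
    (hstay : T y₀ + I x₀ y₀ ≤ T z + I x₀ z)
    (hreply : T z + I x z ≤ T y + I x y) :
    (S x₀ + I x₀ y₀) + (T y₀ + I x₀ y₀) ≤ (1 + k) * ((S x + I x y) + (T y + I x y)) := by
  have habsorb : T y₀ + I x₀ y₀ ≤ (1 + k) * T z + k * (S x₀ + I x₀ y₀) := by
    linarith [hI_le x₀ z, mul_nonneg hk (hI_nonneg x₀ y₀)]
  calc (S x₀ + I x₀ y₀) + (T y₀ + I x₀ y₀)
      ≤ (1 + k) * (S x₀ + I x₀ y₀) + (1 + k) * T z := by linarith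
    _ ≤ (1 + k) * (S x + I x z) + (1 + k) * T z := by gcongr
    _ = (1 + k) * (S x + (T z + I x z)) := by ring
    _ ≤ (1 + k) * (S x + (T y + I x y)) := by gcongr
    _ ≤ (1 + k) * ((S x + I x y) + (T y + I x y)) := by
      gcongr
      exact le_add_of_nonneg_right (hI_nonneg x y)

namespace CGame

variable {w₁ w₂ : ℝ} (G : CGame w₁ w₂)

/-- The proportional cost of a player of weight `w` who is alone on the resources of `a`; this is
the part of the player's cost that does not depend on the opponent. -/
def soloCost (w : ℝ) (a : Finset (Fin G.n)) : ℝ :=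
  w * ∑ r ∈ a, (G.α r + G.β r * w)

/-- The extra cost that each player causes the other on the shared resources. For proportional
costs it is the same for both players. -/
def interactionCost (a₁ a₂ : Finset (Fin G.n)) : ℝ :=
  w₁ * w₂ * ∑ r ∈ a₁ ∩ a₂, G.β r

lemma mul_sum_eq_soloCost_add (w w' : ℝ) (a a' : Finset (Fin G.n)) :
    w * ∑ r ∈ a, (G.α r + G.β r * (w + if r ∈ a' then w' else 0)) =
      G.soloCost w a + w * w' * ∑ r ∈ a ∩ a', G.β r := by
  simp only [soloCost, mul_add, sum_add_distrib, mul_ite, mul_zero, sum_ite_mem, ← sum_mul]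
  ring

lemma C1prop_eq_soloCost_add_interactionCost (a₁ a₂ : Finset (Fin G.n)) :
    G.C1prop a₁ a₂ = G.soloCost w₁ a₁ + G.interactionCost a₁ a₂ := by
  rw [interactionCost, ← mul_sum_eq_soloCost_add, C1prop]
  congr 1
  exact sum_congr rfl fun r hr => by rw [load, if_pos hr]

lemma C2prop_eq_soloCost_add_interactionCost (a₁ a₂ : Finset (Fin G.n)) :
    G.C2prop a₁ a₂ = G.soloCost w₂ a₂ + G.interactionCost a₁ a₂ := by
  rw [interactionCost, mul_comm w₁, inter_comm, ← mul_sum_eq_soloCost_add, C2prop]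
  congr 1
  exact sum_congr rfl fun r hr => by rw [load, if_pos hr, add_comm w₂]

lemma interactionCost_nonneg (h₁ : 0 ≤ w₁) (h₂ : 0 ≤ w₂) (a₁ a₂ : Finset (Fin G.n)) :
    0 ≤ G.interactionCost a₁ a₂ :=
  mul_nonneg (mul_nonneg h₁ h₂) (sum_nonneg fun r _ => G.β_nonneg r)

lemma sq_mul_sum_β_le_soloCost {w : ℝ} (hw : 0 ≤ w) {s a : Finset (Fin G.n)} (hs : s ⊆ a) :
    w ^ 2 * ∑ r ∈ s, G.β r ≤ G.soloCost w a := by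
  calc w ^ 2 * ∑ r ∈ s, G.β r
      ≤ w ^ 2 * ∑ r ∈ a, G.β r := by
        gcongr
        exact fun r _ _ => G.β_nonneg r
    _ = w * ∑ r ∈ a, G.β r * w := by rw [← sum_mul]; ring
    _ ≤ G.soloCost w a := by
        unfold soloCost
        gcongr with r
        exact le_add_of_nonneg_left (G.α_nonneg r)

lemma sq_add_sq_mul_interactionCost_le (h₁ : 0 ≤ w₁) (h₂ : 0 ≤ w₂) (a₁ a₂ : Finset (Fin G.n)) :
    (w₁ ^ 2 + w₂ ^ 2) * G.interactionCost a₁ a₂ ≤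
      w₁ * w₂ * (G.soloCost w₁ a₁ + G.soloCost w₂ a₂) := by
  calc (w₁ ^ 2 + w₂ ^ 2) * G.interactionCost a₁ a₂
      = w₁ * w₂ * (w₁ ^ 2 * ∑ r ∈ a₁ ∩ a₂, G.β r + w₂ ^ 2 * ∑ r ∈ a₁ ∩ a₂, G.β r) := by
        rw [interactionCost]; ring
    _ ≤ w₁ * w₂ * (G.soloCost w₁ a₁ + G.soloCost w₂ a₂) := by
        gcongr
        · exact G.sq_mul_sum_β_le_soloCost h₁ inter_subset_left
        · exact G.sq_mul_sum_β_le_soloCost h₂ inter_subset_right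

end CGame

/-- sequential price of anarchy upper bound for proportionally
weighted two-player congestion games with weights `w₁, w₂`. -/
theorem poa_seq_prop_upper (w₁ w₂ : ℝ) (h₁ : 0 ≤ w₁) (h₂ : 0 ≤ w₂)
    (hsum : 0 < w₁ + w₂) (G : CGame w₁ w₂) (a₁ a₂ b₁ b₂ : Finset (Fin G.n))
    (hA : G.IsSPE1Prop a₁ a₂ ∨ G.IsSPE2Prop a₁ a₂) (hB : G.IsProfile b₁ b₂) :
    G.Cprop a₁ a₂ ≤
      (1 + w₁ * w₂ / (w₁ ^ 2 + w₂ ^ 2)) * G.Cprop b₁ b₂ := by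
  have hpos : 0 < w₁ ^ 2 + w₂ ^ 2 := by nlinarith [sq_nonneg (w₁ - w₂)]
  have hk : 0 ≤ w₁ * w₂ / (w₁ ^ 2 + w₂ ^ 2) := by positivity
  have hI_nonneg := G.interactionCost_nonneg h₁ h₂
  have hI_le (x y) : G.interactionCost x y ≤
      w₁ * w₂ / (w₁ ^ 2 + w₂ ^ 2) * (G.soloCost w₁ x + G.soloCost w₂ y) := by
    rw [div_mul_eq_mul_div, le_div_iff₀' hpos]
    exact G.sq_add_sq_mul_interactionCost_le h₁ h₂ x y
  simp only [CGame.IsSPE1Prop, CGame.IsSPE2Prop, CGame.Cprop,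
    G.C1prop_eq_soloCost_add_interactionCost, G.C2prop_eq_soloCost_add_interactionCost] at hA ⊢
  obtain ⟨⟨ha₁, -⟩, f, hf, hreply, rfl, hlead⟩ | ⟨⟨-, ha₂⟩, f, hf, hreply, rfl, hlead⟩ := hA
  · exact leaderFollower_cost_le hk hI_nonneg hI_le (hlead b₁ hB.1)
      (hreply a₁ ha₁ (f b₁) (hf b₁ hB.1)) (hreply b₁ hB.1 b₂ hB.2)
  · have h := leaderFollower_cost_le (I := fun y x => G.interactionCost x y) hk
      (fun y x => hI_nonneg x y) (fun y x => add_comm (G.soloCost w₁ x) _ ▸ hI_le x y)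
      (hlead b₂ hB.2) (hreply a₂ ha₂ (f b₂) (hf b₂ hB.2)) (hreply b₂ hB.2 b₁ hB.1)
    rwa [add_comm (_ + _), add_comm (G.soloCost w₂ b₂ + _)] at h
end

section
/- Let w₁, w₂ > 0. There exist a weighted two-player congestion game with weights w₁, w₂ and proportional costs, a subgame-perfect outcome A with player 1 moving first, and an action profile B such that C(B) > 0 and C(A) = (1 + w₁·w₂/(w₁² + w₂²)) · C(B). In particular, for w₁ = w₂ the ratio C(A)/C(B) equals 3/2. -/
open Finset Real

/-!
Each player has a constant-cost resource of their own, and both may use a third resource whose cost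
is its load. It is cheapest overall to leave that resource to player 2, for a social cost of
`w₁ ^ 2 + w₂ ^ 2`. The constant of player 1 is chosen so that an uncongested shared resource is just
as good for them, and the constant of player 2 so that leaving the shared resource once player 1
occupies it costs nothing extra. Player 1 may thus occupy it first and drive player 2 away, which
raises the cost of player 2 by `w₁ * w₂` and helps nobody.
-/

namespace CGame

section BestReply

variable {w₁ w₂ : ℝ}

/-- `y` is a best reply of player 2 to the action `x` of player 1, under proportional costs. The
action `x` itself is not required to be admissible. -/
def IsBestReply2Prop (G : CGame w₁ w₂) (x y : Finset (Fin G.n)) : Prop :=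
  y ∈ G.A2 ∧ ∀ z ∈ G.A2, G.C2prop x y ≤ G.C2prop x z

theorem isSPE1Prop_iff_isBestReply2Prop {G : CGame w₁ w₂} {a₁ a₂ : Finset (Fin G.n)} :
    G.IsSPE1Prop a₁ a₂ ↔
      a₁ ∈ G.A1 ∧ G.IsBestReply2Prop a₁ a₂ ∧
        ∀ x ∈ G.A1, ∃ y, G.IsBestReply2Prop x y ∧ G.C1prop a₁ a₂ ≤ G.C1prop x y := by
  constructor
  · rintro ⟨⟨ha₁, ha₂⟩, b, hb_mem, hb_best, rfl, ha₁_opt⟩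
    exact ⟨ha₁, ⟨ha₂, hb_best a₁ ha₁⟩,
      fun x hx ↦ ⟨b x, ⟨hb_mem x hx, hb_best x hx⟩, ha₁_opt x hx⟩⟩
  · rintro ⟨ha₁, ha₂, hreply⟩
    choose! b hb using hreply
    let b' := Function.update b a₁ a₂
    have hb'_self : b' a₁ = a₂ := Function.update_self ..
    have hb' : ∀ x ∈ G.A1, G.IsBestReply2Prop x (b' x) ∧ G.C1prop a₁ a₂ ≤ G.C1prop x (b' x) := by
      intro x hx
      rcases eq_or_ne x a₁ with rfl | hne
      · rw [hb'_self]
        exact ⟨ha₂, le_rfl⟩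
      · rw [show b' x = b x from Function.update_of_ne hne ..]
        exact hb x hx
    exact ⟨⟨ha₁, ha₂.1⟩, b', fun x hx ↦ (hb' x hx).1.1, fun x hx ↦ (hb' x hx).1.2,
      hb'_self.symm, fun x hx ↦ (hb' x hx).2⟩

end BestReply

section LowerBound

variable {w₁ w₂ : ℝ} (h₁ : 0 ≤ w₁) (h₂ : 0 ≤ w₂)

/-- The game attaining the lower bound. Player 1 chooses between the resources `0` and `1`, player 2
between `1` and `2`. The shared resource `1` costs its load, while `0` and `2` have the constant
costs `w₁` and `w₁ + w₂`. It is reducible so that numerals are elaborated as resources. -/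
abbrev lowerBoundGame : CGame w₁ w₂ where
  n := 3
  A1 := {{0}, {1}}
  A2 := {{1}, {2}}
  A1_nonempty := insert_nonempty _ _
  A2_nonempty := insert_nonempty _ _
  α := ![w₁, 0, w₁ + w₂]
  β := ![0, 1, 0]
  α_nonneg r := by fin_cases r <;> simp [h₁, add_nonneg h₁ h₂]
  β_nonneg r := by fin_cases r <;> simp

theorem lowerBoundGame_C1prop_zero (j : Fin 3) :
    (lowerBoundGame h₁ h₂).C1prop {0} {j} = w₁ ^ 2 := by
  simp [C1prop, load, sq]

theorem lowerBoundGame_C1prop_one_two :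
    (lowerBoundGame h₁ h₂).C1prop {1} {2} = w₁ ^ 2 := by
  simp [C1prop, load, sq]

theorem lowerBoundGame_C2prop_zero_one :
    (lowerBoundGame h₁ h₂).C2prop {0} {1} = w₂ ^ 2 := by
  simp [C2prop, load, sq]

theorem lowerBoundGame_C2prop_one_one :
    (lowerBoundGame h₁ h₂).C2prop {1} {1} = w₂ * (w₁ + w₂) := by
  simp [C2prop, load]

theorem lowerBoundGame_C2prop_two (i : Fin 3) :
    (lowerBoundGame h₁ h₂).C2prop {i} {2} = w₂ * (w₁ + w₂) := by
  simp [C2prop, load]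

theorem lowerBoundGame_isBestReply2Prop_zero_one :
    (lowerBoundGame h₁ h₂).IsBestReply2Prop {0} {1} := by
  refine ⟨by simp, ?_⟩
  simp only [mem_insert, mem_singleton, forall_eq_or_imp, forall_eq]
  rw [lowerBoundGame_C2prop_zero_one, lowerBoundGame_C2prop_two, sq]
  exact ⟨le_rfl, mul_le_mul_of_nonneg_left (le_add_of_nonneg_left h₁) h₂⟩

theorem lowerBoundGame_isBestReply2Prop_one_two :
    (lowerBoundGame h₁ h₂).IsBestReply2Prop {1} {2} := by
  refine ⟨by simp, ?_⟩
  simp only [mem_insert, mem_singleton, forall_eq_or_imp, forall_eq]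
  rw [lowerBoundGame_C2prop_one_one, lowerBoundGame_C2prop_two]
  exact ⟨le_rfl, le_rfl⟩

theorem lowerBoundGame_isSPE1Prop_one_two :
    (lowerBoundGame h₁ h₂).IsSPE1Prop {1} {2} := by
  have hreply := lowerBoundGame_isBestReply2Prop_one_two h₁ h₂
  refine isSPE1Prop_iff_isBestReply2Prop.mpr ⟨by simp, hreply, ?_⟩
  simp only [mem_insert, mem_singleton, forall_eq_or_imp, forall_eq]
  refine ⟨⟨{1}, lowerBoundGame_isBestReply2Prop_zero_one h₁ h₂, ?_⟩, {2}, hreply, le_rfl⟩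
  rw [lowerBoundGame_C1prop_one_two, lowerBoundGame_C1prop_zero]

theorem lowerBoundGame_isProfile_zero_one : (lowerBoundGame h₁ h₂).IsProfile {0} {1} := by
  simp [IsProfile]

theorem lowerBoundGame_Cprop_zero_one :
    (lowerBoundGame h₁ h₂).Cprop {0} {1} = w₁ ^ 2 + w₂ ^ 2 := by
  rw [Cprop, lowerBoundGame_C1prop_zero, lowerBoundGame_C2prop_zero_one]

theorem lowerBoundGame_Cprop_one_two :
    (lowerBoundGame h₁ h₂).Cprop {1} {2} = w₁ ^ 2 + w₂ ^ 2 + w₁ * w₂ := by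
  rw [Cprop, lowerBoundGame_C1prop_one_two, lowerBoundGame_C2prop_two]
  ring

end LowerBound

end CGame

/-- matching lower-bound instance for sequential proportionally
weighted two-player congestion games, with player 1 moving first; for equal
weights the ratio equals `3/2`. -/
theorem poa_seq_prop_lower (w₁ w₂ : ℝ) (h₁ : 0 < w₁) (h₂ : 0 < w₂) :
    ∃ (G : CGame w₁ w₂) (a₁ a₂ b₁ b₂ : Finset (Fin G.n)),
      G.IsSPE1Prop a₁ a₂ ∧ G.IsProfile b₁ b₂ ∧ 0 < G.Cprop b₁ b₂ ∧
      G.Cprop a₁ a₂ =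
        (1 + w₁ * w₂ / (w₁ ^ 2 + w₂ ^ 2)) * G.Cprop b₁ b₂ ∧
      (w₁ = w₂ → G.Cprop a₁ a₂ / G.Cprop b₁ b₂ = 3 / 2) := by
  let G := CGame.lowerBoundGame h₁.le h₂.le
  have hB : G.Cprop {0} {1} = w₁ ^ 2 + w₂ ^ 2 := CGame.lowerBoundGame_Cprop_zero_one h₁.le h₂.le
  have hB_pos : 0 < G.Cprop {0} {1} := by rw [hB]; positivity
  have hratio : G.Cprop {1} {2} = (1 + w₁ * w₂ / (w₁ ^ 2 + w₂ ^ 2)) * G.Cprop {0} {1} := by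
    rw [CGame.lowerBoundGame_Cprop_one_two, hB]
    field_simp
  refine ⟨G, {1}, {2}, {0}, {1}, CGame.lowerBoundGame_isSPE1Prop_one_two h₁.le h₂.le,
    CGame.lowerBoundGame_isProfile_zero_one h₁.le h₂.le, hB_pos, hratio, ?_⟩
  rintro rfl
  rw [hratio, mul_div_cancel_right₀ _ hB_pos.ne']
  field_simp
  norm_num
end
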